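/- Let p_1, ..., p_k be pairwise distinct nonzero integral polynomials. Then there exists N ∈ ℕ such that for every colouring χ: {1,...,N} → ℕ there exist a ∈ ℤ and d ≠ 0 with {a, a+p_1(d), ..., a+p_k(d)} ⊆ {1,...,N} such that either χ takes the same value on all of a, a+p_1(d), ..., a+p_k(d), or these integers are pairwise distinct and χ takes pairwise distinct values on them. -/

import Mathlib

namespace CPV

/-- The PET reduction of `f` by `f1`. -/
def red {G : Type} [Group G] (f f1 : ℤ → G) (y : G) (h : ℤ) : ℤ → G :=
  fun e => y⁻¹ * (f h)⁻¹ * f (h + e) * (f1 e)⁻¹ * y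

/-- Families of sequences that can be reduced to the empty family. -/
inductive Good {G : Type} [Group G] : Set (ℤ → G) → Prop
  | empty : Good ∅
  | mono {F F' : Set (ℤ → G)} : Good F → F' ⊆ insert 1 F → Good F'
  | step {F : Set (ℤ → G)} (f1 : ℤ → G) : F.Finite → (∀ f ∈ F, f 0 = 1) → f1 ∈ F →
      (∀ B : Set G, B.Finite → ∀ H : Set ℤ, H.Finite →
        Good {g | ∃ f ∈ F, ∃ y ∈ B, ∃ h ∈ H, g = red f f1 y h}) → Good F

theorem good_vdw {G : Type} [Group G] (F : Set (ℤ → G)) (hF : Good F) :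
    ∀ (κ : Type) [Finite κ], ∃ B : Set G, B.Finite ∧ ∃ H : Set ℤ, H.Finite ∧ (∀ e ∈ H, 0 < e) ∧
      ∀ φ : G → κ, ∃ y ∈ B, ∃ e ∈ H, ∀ f ∈ F, φ (f e * y) = φ y := by
  induction hF with
  | empty =>
    intro κ _
    exact ⟨{1}, Set.finite_singleton _, {1}, Set.finite_singleton _, by simp, by simp⟩
  | @mono F F' hF hsub ih =>
    intro κ _
    obtain ⟨B, hB, H, hH, hpos, h⟩ := ih κ
    refine ⟨B, hB, H, hH, hpos, fun φ => ?_⟩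
    obtain ⟨y, hy, e, he, h⟩ := h φ
    refine ⟨y, hy, e, he, fun f hf => ?_⟩
    rcases hsub hf with rfl | hf
    · simp
    · exact h f hf
  | @step F f1 hfin hone hf1 hred ih =>
    intro κ _
    have key : ∀ s : ℕ, ∃ B : Set G, B.Finite ∧ ∃ H : Set ℤ, H.Finite ∧ (∀ e ∈ H, 0 < e) ∧
        ∀ φ : G → κ, (∃ y ∈ B, ∃ e ∈ H, ∀ f ∈ F, φ (f e * y) = φ y) ∨
          (∃ y ∈ B, ∃ C : Finset κ, C.card = s ∧
            ∀ c ∈ C, ∃ e ∈ H, ∀ f ∈ F, φ (f e * y) = c) := by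
      intro s
      induction s with
      | zero =>
        exact ⟨{1}, Set.finite_singleton _, {1}, Set.finite_singleton _, by simp,
          fun φ => Or.inr ⟨1, rfl, ∅, by simp, by simp⟩⟩
      | succ s ihs =>
        obtain ⟨B, hB, H, hH, hpos, hs⟩ := ihs
        have hH0 : (insert 0 H).Finite := hH.insert 0
        let Z : Set G := {z | ∃ f ∈ F, ∃ y ∈ B, ∃ h ∈ insert (0 : ℤ) H, z = f h * y}
        have hZ : Z.Finite := by
          refine ((hfin.prod (hB.prod hH0)).image (fun t => t.1 t.2.2 * t.2.1)).subset ?_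
          rintro z ⟨f, hf, y, hy, h, hh, rfl⟩
          exact ⟨(f, y, h), ⟨hf, hy, hh⟩, rfl⟩
        have : Finite Z := hZ.to_subtype
        obtain ⟨B', hB', H', hH', hpos', h'⟩ := ih B hB (insert 0 H) hH0 (Z → κ)
        refine ⟨(fun t : G × G => t.1 * t.2) '' (B ×ˢ B') ∪
            (fun t : ℤ × G × G => (f1 t.1)⁻¹ * t.2.1 * t.2.2) '' (H' ×ˢ (B ×ˢ B')),
          ((hB.prod hB').image _).union ((hH'.prod (hB.prod hB')).image _),
          H ∪ H' ∪ (fun t : ℤ × ℤ => t.1 + t.2) '' (H ×ˢ H'),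
          (hH.union hH').union ((hH.prod hH').image _), ?_, ?_⟩
        · rintro e ((he | he) | ⟨⟨t, u⟩, ⟨ht, hu⟩, rfl⟩)
          · exact hpos e he
          · exact hpos' e he
          · exact add_pos (hpos _ ht) (hpos' _ hu)
        intro φ
        obtain ⟨x, hx, e, he, hxe⟩ := h' (fun x z => φ (z.1 * x))
        have hxe' : ∀ f ∈ F, ∀ y ∈ B, ∀ h ∈ insert (0 : ℤ) H,
            φ (f (h + e) * ((f1 e)⁻¹ * y * x)) = φ (f h * y * x) := by
          intro f hf y hy h hh
          have := congrFun (hxe (red f f1 y h) ⟨f, hf, y, hy, h, hh, rfl⟩)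
            ⟨f h * y, f, hf, y, hy, h, hh, rfl⟩
          simp only at this
          rw [← this]
          congr 1
          simp [red, mul_assoc]
        by_cases hsol : ∃ y ∈ B, ∃ e ∈ H, ∀ f ∈ F, φ (f e * (y * x)) = φ (y * x)
        · obtain ⟨y, hy, e', he', hh⟩ := hsol
          exact Or.inl ⟨y * x, Or.inl ⟨(y, x), ⟨hy, hx⟩, rfl⟩, e', Or.inl (Or.inl he'), hh⟩
        · rcases hs (fun g => φ (g * x)) with ⟨y, hy, e', he', hh⟩ | ⟨y, hy, C, hC, hcol⟩
          · exact absurd ⟨y, hy, e', he', fun f hf => by simpa [mul_assoc] using hh f hf⟩ hsol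
          · right
            have hnot : φ (y * x) ∉ C := by
              intro hmem
              obtain ⟨e', he', hh⟩ := hcol _ hmem
              exact hsol ⟨y, hy, e', he', fun f hf => by simpa [mul_assoc] using hh f hf⟩
            refine ⟨(f1 e)⁻¹ * y * x, Or.inr ⟨(e, y, x), ⟨he, hy, hx⟩, rfl⟩,
              Finset.cons _ C hnot, by simp [hC], ?_⟩
            intro c hc
            rw [Finset.mem_cons] at hc
            rcases hc with rfl | hc
            · refine ⟨e, Or.inl (Or.inr he), fun f hf => ?_⟩
              have := hxe' f hf y hy 0 (Set.mem_insert _ _)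
              simpa [hone f hf] using this
            · obtain ⟨e', he', hh⟩ := hcol _ hc
              refine ⟨e' + e, Or.inr ⟨(e', e), ⟨he', he⟩, rfl⟩, fun f hf => ?_⟩
              rw [hxe' f hf y hy e' (Set.mem_insert_of_mem _ he')]
              exact hh f hf
    obtain ⟨B, hB, H, hH, hpos, h⟩ := key (Nat.card κ + 1)
    refine ⟨B, hB, H, hH, hpos, fun φ => ?_⟩
    rcases h φ with h | ⟨y, hy, C, hC, -⟩
    · exact h
    · have := Fintype.ofFinite κ
      have := C.card_le_univ
      rw [Nat.card_eq_fintype_card] at hC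
      omega

open Polynomial

/-- The group of maps `(a, d) ↦ (a + P d, d + r)`. -/
@[ext] structure Gp where
  P : Polynomial ℤ
  r : ℤ

namespace Gp
noncomputable instance : Mul Gp := ⟨fun g g' => ⟨g'.P + taylor g'.r g.P, g.r + g'.r⟩⟩
noncomputable instance : One Gp := ⟨⟨0, 0⟩⟩
noncomputable instance : Inv Gp := ⟨fun g => ⟨-taylor (-g.r) g.P, -g.r⟩⟩
@[simp] theorem mul_P (g g' : Gp) : (g * g').P = g'.P + taylor g'.r g.P := rfl
@[simp] theorem mul_r (g g' : Gp) : (g * g').r = g.r + g'.r := rfl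
@[simp] theorem one_P : (1 : Gp).P = 0 := rfl
@[simp] theorem one_r : (1 : Gp).r = 0 := rfl
@[simp] theorem inv_P (g : Gp) : (g⁻¹).P = -taylor (-g.r) g.P := rfl
@[simp] theorem inv_r (g : Gp) : (g⁻¹).r = -g.r := rfl
noncomputable instance : Group Gp := Group.ofLeftAxioms
  (by
    intro a b c
    ext1
    · simp [taylor_taylor, add_comm]
      ring
    · simp [add_assoc])
  (by intro a; ext1 <;> simp)
  (by intro a; ext1 <;> simp [taylor_taylor])
end Gp

/-- polynomial sequences of integer polynomials -/
def IsPol (u : ℤ → Polynomial ℤ) : Prop := ∃ T : Polynomial (Polynomial ℤ), ∀ e, u e = T.eval (C e)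

theorem IsPol.add {u v : ℤ → Polynomial ℤ} (hu : IsPol u) (hv : IsPol v) :
    IsPol (fun e => u e + v e) := by
  obtain ⟨T, hT⟩ := hu
  obtain ⟨S, hS⟩ := hv
  exact ⟨T + S, fun e => by simp [hT, hS]⟩

theorem IsPol.mul {u v : ℤ → Polynomial ℤ} (hu : IsPol u) (hv : IsPol v) :
    IsPol (fun e => u e * v e) := by
  obtain ⟨T, hT⟩ := hu
  obtain ⟨S, hS⟩ := hv
  exact ⟨T * S, fun e => by simp [hT, hS]⟩

theorem IsPol.neg {u : ℤ → Polynomial ℤ} (hu : IsPol u) : IsPol (fun e => - u e) := by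
  obtain ⟨T, hT⟩ := hu
  exact ⟨-T, fun e => by simp [hT]⟩

theorem IsPol.const (p : Polynomial ℤ) : IsPol (fun _ => p) := ⟨C p, fun e => by simp⟩

theorem IsPol.C (S : Polynomial ℤ) : IsPol (fun e => C (S.eval e)) :=
  ⟨S.map Polynomial.C, fun e => by
    rw [Polynomial.eval_map, Polynomial.eval₂_at_apply]⟩

theorem IsPol.pow {u : ℤ → Polynomial ℤ} (hu : IsPol u) (n : ℕ) : IsPol (fun e => u e ^ n) := by
  obtain ⟨T, hT⟩ := hu
  exact ⟨T ^ n, fun e => by simp [hT]⟩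

theorem IsPol.taylor_const (p : Polynomial ℤ) (s : ℤ → ℤ) (S : Polynomial ℤ)
    (hs : ∀ e, s e = S.eval e) : IsPol (fun e => taylor (s e) p) := by
  obtain rfl : s = fun e => S.eval e := funext hs
  induction p using Polynomial.induction_on' with
  | add p q hp hq => simpa using hp.add hq
  | monomial n a =>
    simp only [taylor_monomial]
    exact (IsPol.const _).mul (((IsPol.const _).add (IsPol.C S)).pow n)

theorem IsPol.taylor {u : ℤ → Polynomial ℤ} (hu : IsPol u) (s : ℤ → ℤ) (S : Polynomial ℤ)
    (hs : ∀ e, s e = S.eval e) : IsPol (fun e => taylor (s e) (u e)) := by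
  obtain ⟨T, hT⟩ := hu
  obtain rfl : u = _ := funext hT
  clear hT
  induction T using Polynomial.induction_on' with
  | add p q hp hq => simpa using hp.add hq
  | monomial n a =>
    simp only [eval_monomial, taylor_mul, taylor_pow, taylor_C]
    refine (IsPol.taylor_const a s S hs).mul (IsPol.pow ?_ n)
    exact ⟨X, fun e => by simp⟩

abbrev Dat := Polynomial ℤ × Polynomial (Polynomial ℤ)

def Valid (D : Dat) : Prop := D.1.coeff 0 = 0 ∧ D.2.coeff 0 = 0

noncomputable def ev (D : Dat) (e : ℤ) : Gp := ⟨D.2.eval (C e), D.1.eval e⟩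

theorem ev_zero {D : Dat} (h : Valid D) : ev D 0 = 1 := by
  ext1
  · simp [ev, ← coeff_zero_eq_eval_zero, h.2]
  · simp [ev, ← coeff_zero_eq_eval_zero, h.1]

abbrev Idx := (ℕ ×ₗ ℕ) ⊕ₗ ℕ

noncomputable def cf (D : Dat) (m : Idx) : ℤ :=
  Sum.elim (fun ji : ℕ ×ₗ ℕ => (D.2.coeff (ofLex ji).1).coeff (ofLex ji).2)
    (fun n => D.1.coeff n) (ofLex m)

theorem eq_of_eval_C {T S : Polynomial (Polynomial ℤ)}
    (h : ∀ e : ℤ, T.eval (C e) = S.eval (C e)) : T = S := by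
  apply Polynomial.eq_of_infinite_eval_eq
  refine Set.Infinite.mono (s := Set.range (fun e : ℤ => (C e : Polynomial ℤ))) ?_ ?_
  · rintro _ ⟨e, rfl⟩
    exact h e
  · exact Set.infinite_range_of_injective C_injective

theorem coeff_taylor_top {K : Type} [CommRing K] (p : Polynomial K) (h : K) (n : ℕ)
    (hp : ∀ m, n < m → p.coeff m = 0) : (taylor h p).coeff n = p.coeff n := by
  have hd : p.natDegree ≤ n := natDegree_le_iff_coeff_eq_zero.2 (by exact fun m hm => hp m hm)
  rcases hd.lt_or_eq with hlt | rfl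
  · rw [coeff_eq_zero_of_natDegree_lt hlt,
      coeff_eq_zero_of_natDegree_lt (by rwa [natDegree_taylor])]
  · rw [coeff_taylor_natDegree]; rfl

theorem exists_red (D D1 : Dat) (hD : Valid D) (hD1 : Valid D1) (y : Gp) (h : ℤ) :
    ∃ D' : Dat, Valid D' ∧ ev D' = red (ev D) (ev D1) y h ∧
      ∀ m, (∀ m', m < m' → cf D m' = 0 ∧ cf D1 m' = 0) → cf D' m = cf D m - cf D1 m := by
  obtain ⟨R, Q⟩ := D
  obtain ⟨R1, Q1⟩ := D1
  obtain ⟨hR, hQ⟩ := hD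
  obtain ⟨hR1, hQ1⟩ := hD1
  simp only at hR hQ hR1 hQ1
  have hQpol : IsPol (fun e => Q.eval (C (h + e))) := ⟨taylor (C h) Q, fun e => by
    simp only [taylor_eval, C_add, add_comm]⟩
  have hP : IsPol (fun e => (red (ev (R, Q)) (ev (R1, Q1)) y h e).P) := by
    simp only [red, ev, Gp.mul_P, Gp.inv_P, Gp.inv_r]
    refine (IsPol.const _).add (IsPol.taylor (IsPol.add ?_ (IsPol.taylor (IsPol.add hQpol
      (IsPol.taylor (IsPol.const _) _ (taylor h R) ?_)) _ (-R1) ?_)) _ (C y.r) ?_)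
    · exact (IsPol.taylor ⟨Q1, fun e => rfl⟩ _ (-R1) (by simp)).neg
    · intro e; rw [taylor_eval, add_comm]
    · simp
    · simp
  obtain ⟨T, hT⟩ := hP
  replace hT : ∀ e, (red (ev (R, Q)) (ev (R1, Q1)) y h e).P = T.eval (C e) := hT
  have hev : ev (taylor h R - C (R.eval h) - R1, T) = red (ev (R, Q)) (ev (R1, Q1)) y h := by
    funext e
    ext1
    · rw [hT]; rfl
    · simp [ev, red, taylor_eval, add_comm e h]; ring
  have hR'0 : (taylor h R - C (R.eval h) - R1).coeff 0 = 0 := by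
    simp [taylor_coeff_zero, hR1]
  have hT0 : T.coeff 0 = 0 := by
    have := hT 0
    rw [C_0, ← coeff_zero_eq_eval_zero] at this
    rw [← this]
    have h1 := ev_zero (D := (R1, Q1)) ⟨hR1, hQ1⟩
    simp [red, h1, mul_assoc]
  refine ⟨_, ⟨hR'0, hT0⟩, hev, ?_⟩
  intro m hm
  rcases m with ⟨j, i⟩ | n
  · have hR0 : R = 0 := by
      ext n
      simpa [cf] using (hm (toLex (Sum.inr n)) (Sum.Lex.inl_lt_inr _ _)).1
    have hR10 : R1 = 0 := by
      ext n
      simpa [cf] using (hm (toLex (Sum.inr n)) (Sum.Lex.inl_lt_inr _ _)).2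
    subst hR0 hR10
    have hTT : T = (taylor (C h) Q - C (Q.eval (C h)) - Q1).map
        (taylorAlgHom y.r : Polynomial ℤ →+* Polynomial ℤ) := by
      apply eq_of_eval_C
      intro e
      rw [← hT e]
      have hc : (C e : Polynomial ℤ) = (taylorAlgHom y.r : Polynomial ℤ →+* Polynomial ℤ) (C e) := by
        simp
      rw [hc, eval_map, eval₂_at_apply]
      simp [red, ev, taylor_eval, taylor_taylor, add_comm]
      ring
    have hbig : ∀ j' i', toLex (j, i) < toLex (j', i') →
        (Q.coeff j').coeff i' = 0 ∧ (Q1.coeff j').coeff i' = 0 := by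
      intro j' i' hlt
      simpa [cf] using hm (toLex (Sum.inl (toLex (j', i')))) (Sum.Lex.inl_lt_inl_iff.2 hlt)
    change (T.coeff j).coeff i = (Q.coeff j).coeff i - (Q1.coeff j).coeff i
    rcases Nat.eq_zero_or_pos j with rfl | hj
    · simp [hT0, hQ, hQ1]
    · have hj' : j ≠ 0 := hj.ne'
      have hqj : (taylor (C h) Q).coeff j = Q.coeff j := by
        apply coeff_taylor_top
        intro m hjm
        ext i'
        simpa using (hbig m i' (Prod.Lex.toLex_lt_toLex.2 (Or.inl hjm))).1
      rw [hTT, coeff_map]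
      simp only [coeff_sub, coeff_C, hj', if_false, sub_zero, hqj]
      change (taylor y.r (Q.coeff j - Q1.coeff j)).coeff i = _
      rw [coeff_taylor_top, coeff_sub]
      intro i' hi'
      have := hbig j i' (Prod.Lex.toLex_lt_toLex.2 (Or.inr ⟨rfl, hi'⟩))
      simp [this.1, this.2]
  · change (taylor h R - C (R.eval h) - R1).coeff n = R.coeff n - R1.coeff n
    rcases Nat.eq_zero_or_pos n with rfl | hn
    · rw [hR'0, hR, hR1]; simp
    · simp only [coeff_sub, coeff_C, hn.ne', if_false, sub_zero]
      rw [coeff_taylor_top]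
      intro m hnm
      exact (hm (toLex (Sum.inr m)) (Sum.Lex.inr_lt_inr_iff.2 hnm)).1

instance wfIdx : WellFoundedLT Idx :=
  ⟨Sum.lex_wf (wellFounded_lt (α := ℕ ×ₗ ℕ)) (wellFounded_lt (α := ℕ))⟩

theorem exists_lev (D : Dat) (hD : D ≠ 0) : ∃ l, cf D l ≠ 0 ∧ ∀ m, l < m → cf D m = 0 := by
  obtain ⟨R, Q⟩ := D
  by_cases hR : R = 0
  · subst hR
    have hQ : Q ≠ 0 := by
      rintro rfl
      exact hD rfl
    refine ⟨toLex (Sum.inl (toLex (Q.natDegree, Q.leadingCoeff.natDegree))), ?_, ?_⟩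
    · simpa [cf] using hQ
    · rintro (⟨j, i⟩ | n) hm
      · have hm' := Prod.Lex.toLex_lt_toLex.1 (Sum.Lex.inl_lt_inl_iff.1 hm)
        change (Q.coeff j).coeff i = 0
        rcases hm' with h | ⟨h, h'⟩
        · simp only at h
          rw [coeff_eq_zero_of_natDegree_lt h, coeff_zero]
        · simp only at h h'
          subst h
          exact coeff_eq_zero_of_natDegree_lt h'
      · change (0 : Polynomial ℤ).coeff n = 0
        simp
  · refine ⟨toLex (Sum.inr R.natDegree), ?_, ?_⟩
    · simpa [cf] using hR
    · rintro (⟨j, i⟩ | n) hm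
      · exact absurd hm Sum.Lex.not_inr_lt_inl
      · exact coeff_eq_zero_of_natDegree_lt (Sum.Lex.inr_lt_inr_iff.1 hm)

open Classical in
noncomputable def lev (D : Dat) : Idx :=
  if h : D ≠ 0 then (exists_lev D h).choose else toLex (Sum.inr 0)

theorem lev_ne {D : Dat} (hD : D ≠ 0) : cf D (lev D) ≠ 0 := by
  rw [lev, dif_pos hD]; exact (exists_lev D hD).choose_spec.1

theorem lev_gt {D : Dat} (hD : D ≠ 0) : ∀ m, lev D < m → cf D m = 0 := by
  rw [lev, dif_pos hD]; exact (exists_lev D hD).choose_spec.2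

noncomputable def cls (D : Dat) : Idx × ℤ := (lev D, cf D (lev D))

open Classical in
noncomputable def wt (F : Finset Dat) : Multiset Idx := (F.image cls).val.map Prod.fst

theorem dm_aux (S S' : Finset (Idx × ℤ)) (m0 : Idx) (c1 : ℤ) (c : Idx → ℤ) (h1 : (m0, c1) ∈ S)
    (h : ∀ s ∈ S', m0 ≤ s.1 → (s.1, s.2 + c s.1) ∈ S ∧ (s.1, s.2 + c s.1) ≠ (m0, c1)) :
    Multiset.IsDershowitzMannaLT (S'.val.map Prod.fst) (S.val.map Prod.fst) := by
  classical
  let ψ : (Idx × ℤ) ↪ (Idx × ℤ) := ⟨fun s => (s.1, s.2 + c s.1), by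
    rintro ⟨a, b⟩ ⟨a', b'⟩ h
    simp only [Prod.mk.injEq] at h
    obtain ⟨rfl, h⟩ := h
    simpa using h⟩
  let T := (S'.filter (fun s => m0 ≤ s.1)).map ψ
  have hT : T ⊆ S := by
    intro t ht
    obtain ⟨s, hs, rfl⟩ := Finset.mem_map.1 ht
    rw [Finset.mem_filter] at hs
    exact (h s hs.1 hs.2).1
  have hT1 : (m0, c1) ∉ T := by
    intro ht
    obtain ⟨s, hs, hs'⟩ := Finset.mem_map.1 ht
    rw [Finset.mem_filter] at hs
    exact (h s hs.1 hs.2).2 hs'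
  have hm : m0 ∈ (S \ T).val.map Prod.fst :=
    Multiset.mem_map.2 ⟨(m0, c1), Finset.mem_sdiff.2 ⟨h1, hT1⟩, rfl⟩
  refine ⟨T.val.map Prod.fst, (S'.filter (fun s => ¬ m0 ≤ s.1)).val.map Prod.fst,
    (S \ T).val.map Prod.fst, ?_, ?_, ?_, ?_⟩
  · intro h0
    rw [h0] at hm
    simp at hm
  · have : T.val.map Prod.fst = (S'.filter (fun s => m0 ≤ s.1)).val.map Prod.fst := by
      simp only [T, Finset.map_val, Multiset.map_map]
      rfl
    rw [this, ← Multiset.map_add, Finset.filter_val, Finset.filter_val,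
      Multiset.filter_add_not]
  · rw [← Multiset.map_add, Finset.sdiff_val, add_tsub_cancel_of_le (Finset.val_le_iff.2 hT)]
  · intro y hy
    obtain ⟨s, hs, rfl⟩ := Multiset.mem_map.1 hy
    refine ⟨m0, hm, ?_⟩
    exact not_le.1 (Finset.mem_filter.1 hs).2

theorem good_data (F : Finset Dat) (hF : ∀ D ∈ F, Valid D ∧ D ≠ 0) :
    Good (ev '' (F : Set Dat)) := by
  classical
  generalize hW : wt F = W
  induction W using (Multiset.wellFounded_isDershowitzMannaLT (α := Idx)).induction
    generalizing F with
  | _ W ih =>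
  subst hW
  rcases F.eq_empty_or_nonempty with rfl | hne
  · simpa using Good.empty
  obtain ⟨D1, hD1, hmin⟩ := Finset.exists_min_image F lev hne
  refine Good.step (ev D1) (F.finite_toSet.image _) ?_ ⟨D1, hD1, rfl⟩ ?_
  · rintro _ ⟨D, hD, rfl⟩
    exact ev_zero (hF D hD).1
  intro B hB H hH
  choose! rd hrd1 hrd2 hrd3 using fun (D : Dat) (hD : Valid D) =>
    exists_red D D1 hD (hF D1 hD1).1
  let F' : Finset Dat := ((F ×ˢ (hB.toFinset ×ˢ hH.toFinset)).image
    (fun t => rd t.1 t.2.1 t.2.2)).filter (fun D => D ≠ 0)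
  have hF' : ∀ D ∈ F', ∃ D0 ∈ F, ∃ y h, D = rd D0 y h ∧ D ≠ 0 := by
    intro D hD
    rw [Finset.mem_filter, Finset.mem_image] at hD
    obtain ⟨⟨⟨D0, y, h⟩, ht, rfl⟩, hne⟩ := hD
    exact ⟨D0, (Finset.mem_product.1 ht).1, y, h, rfl, hne⟩
  refine Good.mono (ih (wt F') ?_ F' ?_ rfl) ?_
  · refine dm_aux _ _ (lev D1) (cf D1 (lev D1)) (cf D1) (Finset.mem_image_of_mem cls hD1) ?_
    intro s hs hle
    obtain ⟨D', hD', rfl⟩ := Finset.mem_image.1 hs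
    obtain ⟨D, hD, y, h, rfl, hne⟩ := hF' D' hD'
    change lev D1 ≤ lev (rd D y h) at hle
    change (lev (rd D y h), cf (rd D y h) (lev (rd D y h)) + cf D1 (lev (rd D y h))) ∈ _ ∧
      (lev (rd D y h), cf (rd D y h) (lev (rd D y h)) + cf D1 (lev (rd D y h))) ≠ _
    have hDv := (hF D hD)
    have hD1v := (hF D1 hD1)
    have hmn := hmin D hD
    have hc : ∀ m, lev D ≤ m → cf (rd D y h) m = cf D m - cf D1 m := by
      intro m hm
      refine hrd3 D hDv.1 y h m fun m' hm' => ⟨lev_gt hDv.2 _ (hm.trans_lt hm'),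
        lev_gt hD1v.2 _ ((hmn.trans hm).trans_lt hm')⟩
    have hl : lev (rd D y h) = lev D := by
      rcases lt_trichotomy (lev (rd D y h)) (lev D) with hlt | heq | hgt
      · have h0 := lev_gt hne _ hlt
        rw [hc _ le_rfl, lev_gt hD1v.2 _ (hle.trans_lt hlt), sub_zero] at h0
        exact absurd h0 (lev_ne hDv.2)
      · exact heq
      · have h0 := lev_ne hne
        rw [hc _ hgt.le, lev_gt hDv.2 _ hgt, lev_gt hD1v.2 _ (hmn.trans_lt hgt)] at h0
        simp at h0
    have hnz := lev_ne hne
    rw [hl] at hnz ⊢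
    rw [hc _ le_rfl] at hnz ⊢
    rw [sub_add_cancel]
    refine ⟨Finset.mem_image_of_mem cls hD, ?_⟩
    intro heq
    simp only [Prod.mk.injEq] at heq
    rw [heq.2, heq.1, sub_self] at hnz
    exact hnz rfl
  · intro D hD
    obtain ⟨D0, hD0, y, h, rfl, hne⟩ := hF' D hD
    exact ⟨hrd1 _ (hF _ hD0).1 _ _, hne⟩
  · rintro _ ⟨_, ⟨D, hD, rfl⟩, y, hy, h, hh, rfl⟩
    rw [← hrd2 D (hF D hD).1]
    by_cases h0 : rd D y h = 0
    · left
      rw [h0]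
      funext e
      ext1 <;> simp [ev]
    · right
      refine ⟨_, ?_, rfl⟩
      simp only [F', Finset.coe_filter, Set.mem_ofPred_eq]
      refine ⟨Finset.mem_image.2 ⟨(D, y, h), ?_, rfl⟩, h0⟩
      simp [hy, hh]
      exact hD

theorem nil_vdw (F : Finset Dat) (hF : ∀ D ∈ F, Valid D) (κ : Type) [Finite κ] :
    ∃ B : Set (ℤ × ℤ), B.Finite ∧ ∃ H : Set ℤ, H.Finite ∧ (∀ e ∈ H, 0 < e) ∧
      ∀ φ : ℤ → ℤ → κ, ∃ a d, (a, d) ∈ B ∧ ∃ e ∈ H, ∀ D ∈ F,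
        φ (a + (D.2.eval (C e)).eval d) (d + D.1.eval e) = φ a d := by
  classical
  obtain ⟨B, hB, H, hH, hpos, h⟩ := good_vdw _ (good_data (F.filter (fun D => D ≠ 0))
    (fun D hD => ⟨hF D (Finset.mem_filter.1 hD).1, (Finset.mem_filter.1 hD).2⟩)) κ
  refine ⟨(fun g : Gp => (g.P.eval 0, g.r)) '' B, hB.image _, H, hH, hpos, fun φ => ?_⟩
  obtain ⟨y, hy, e, he, hh⟩ := h (fun g => φ (g.P.eval 0) g.r)
  refine ⟨y.P.eval 0, y.r, ⟨y, hy, rfl⟩, e, he, fun D hD => ?_⟩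
  by_cases h0 : D = 0
  · simp [h0]
  · have := hh (ev D) ⟨D, by simpa [h0] using hD, rfl⟩
    simpa [ev, taylor_eval, add_comm] using this

abbrev K := Polynomial ℤ

/-- evaluation of a bivariate polynomial, outer variable `d`, inner variable `e` -/
noncomputable def E (W : Polynomial K) (d e : ℤ) : ℤ := (W.eval (C d)).eval e

theorem E_swap (W : Polynomial K) (d e : ℤ) :
    ((Bivariate.swap W).eval (C e)).eval d = E W d e := by
  unfold E
  induction W using Polynomial.induction_on' with
  | add p q hp hq => simp only [map_add, eval_add, hp, hq]
  | monomial n p =>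
    induction p using Polynomial.induction_on' with
    | add p q hp hq => simp only [map_add, eval_add, hp, hq]
    | monomial m r =>
      rw [Bivariate.swap_monomial_monomial]
      simp [eval_monomial]
      ring

@[simp] theorem E_add (W S : Polynomial K) (d e : ℤ) : E (W + S) d e = E W d e + E S d e := by
  simp [E]
@[simp] theorem E_sub (W S : Polynomial K) (d e : ℤ) : E (W - S) d e = E W d e - E S d e := by
  simp [E]
@[simp] theorem E_neg (W : Polynomial K) (d e : ℤ) : E (-W) d e = - E W d e := by
  simp [E]
@[simp] theorem E_zero (d e : ℤ) : E 0 d e = 0 := by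
  simp [E]
@[simp] theorem E_C (p : K) (d e : ℤ) : E (C p) d e = p.eval e := by
  simp [E]

theorem valid_swap (R : K) (W : Polynomial K) (hR : R.eval 0 = 0) (hW : ∀ d, E W d 0 = 0) :
    Valid (R, Bivariate.swap W) := by
  refine ⟨by rw [coeff_zero_eq_eval_zero, hR], ?_⟩
  apply Polynomial.funext
  intro d
  have := E_swap W d 0
  rw [hW, C_0, ← coeff_zero_eq_eval_zero] at this
  simpa using this

def Rel (pi pj : K) (χ : ℤ → ℕ) (a d e : ℤ) (D : Dat) : Prop :=
  χ (a + (D.2.eval (C e)).eval d + pi.eval (d + D.1.eval e)) =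
    χ (a + (D.2.eval (C e)).eval d + pj.eval (d + D.1.eval e))

/-- periods -/
def Per (pi pj : K) : AddSubgroup (Polynomial K) where
  carrier := {S | (∀ d, E S d 0 = 0) ∧ ∀ W : Polynomial K, (∀ d, E W d 0 = 0) →
    ∃ F : Finset Dat, (∀ D ∈ F, Valid D) ∧ ∀ (χ : ℤ → ℕ) (a d e : ℤ),
      (∀ D ∈ F, Rel pi pj χ a d e D) →
        χ (a + pi.eval d + E W d e + E S d e) = χ (a + pi.eval d + E W d e)}
  zero_mem' := ⟨by simp, fun W hW => ⟨∅, by simp, by simp⟩⟩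
  add_mem' := by
    classical
    rintro S T ⟨hS, hS'⟩ ⟨hT, hT'⟩
    refine ⟨by simp [hS, hT], fun W hW => ?_⟩
    obtain ⟨F, hF, h⟩ := hS' W hW
    obtain ⟨F', hF', h'⟩ := hT' (W + S) (by simp [hW, hS])
    refine ⟨F ∪ F', ?_, fun χ a d e hr => ?_⟩
    · intro D hD
      rcases Finset.mem_union.1 hD with hD | hD
      exacts [hF D hD, hF' D hD]
    · rw [← h χ a d e fun D hD => hr D (Finset.mem_union_left _ hD)]
      have := h' χ a d e fun D hD => hr D (Finset.mem_union_right _ hD)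
      simpa [add_assoc] using this
  neg_mem' := by
    rintro S ⟨hS, hS'⟩
    refine ⟨by simp [hS], fun W hW => ?_⟩
    obtain ⟨F, hF, h⟩ := hS' (W - S) (by simp [hW, hS])
    refine ⟨F, hF, fun χ a d e hr => ?_⟩
    have := h χ a d e hr
    rw [E_sub] at this
    rw [E_neg]
    convert this.symm using 2
    · ring
    · ring

theorem per_base (pi pj : K) (R : K) (hR : R.eval 0 = 0) :
    taylor R ((pi - pj).map C) - (pi - pj).map C ∈ Per pi pj := by
  classical
  have key : ∀ (q : K) (d e : ℤ), E (taylor R (q.map C) - q.map C) d e =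
      q.eval (d + R.eval e) - q.eval d := by
    intro q d e
    simp only [E, eval_sub, taylor_eval, eval_map]
    rw [eval₂_at_apply, eval_C]
    congr 1
    have := Polynomial.hom_eval₂ q C (evalRingHom e) (C d + R)
    simp only [coe_evalRingHom, eval_add, eval_C] at this
    rw [this]
    have hid : (evalRingHom e).comp C = RingHom.id ℤ := RingHom.ext fun x => by simp
    rw [hid, eval₂_id]
  have key0 : ∀ (q : K) (d : ℤ), E (taylor R (q.map C) - q.map C) d 0 = 0 := by
    intro q d
    rw [key, hR]; simp
  refine ⟨key0 _, fun W hW => ?_⟩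
  refine ⟨{(0, Bivariate.swap W),
    (R, Bivariate.swap (W - (taylor R (pj.map C) - pj.map C)))}, ?_, ?_⟩
  · intro D hD
    simp only [Finset.mem_insert, Finset.mem_singleton] at hD
    rcases hD with rfl | rfl
    · exact valid_swap _ _ (by simp) hW
    · exact valid_swap _ _ hR (fun d => by rw [E_sub, hW, key0]; simp)
  · intro χ a d e hr
    have h1 := hr (0, Bivariate.swap W) (by simp)
    have h2 := hr (R, Bivariate.swap (W - (taylor R (pj.map C) - pj.map C))) (by simp)
    simp only [Rel, E_swap, eval_zero, add_zero] at h1 h2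
    rw [E_sub, key] at h2
    rw [key]
    have e1 : a + pi.eval d + E W d e = a + E W d e + pi.eval d := by ring
    rw [e1, h1]
    convert h2 using 2
    · simp; ring
    · ring

theorem diff_mem (S : AddSubgroup (Polynomial K)) (n : ℕ) : ∀ q : Polynomial K,
    q.natDegree = n + 1 → (∀ R : K, R.eval 0 = 0 → taylor R q - q ∈ S) →
    ∀ R : K, R.eval 0 = 0 → C (((n + 1).factorial : K) * q.leadingCoeff * X ^ n * R) ∈ S := by
  induction n with
  | zero =>
    intro q hq h R hR
    have h1 := h R hR
    rw [eq_X_add_C_of_natDegree_le_one hq.le] at h1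
    convert h1 using 1
    simp [leadingCoeff, hq, taylor_mul]
    ring
  | succ n ih =>
    intro q hq h R hR
    have hc : (taylor X q - q).coeff (n + 1) = ((n + 2 : ℕ) : K) * q.leadingCoeff * X := by
      rw [coeff_sub, taylor_coeff]
      have hd : (hasseDeriv (n + 1) q).natDegree ≤ 1 := by
        refine (natDegree_hasseDeriv_le _ _).trans ?_
        omega
      rw [eq_X_add_C_of_natDegree_le_one hd]
      simp only [hasseDeriv_coeff, leadingCoeff, hq]
      simp [add_comm 1 (n + 1)]
      left
      ring
    have hlc : q.leadingCoeff ≠ 0 := by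
      rw [leadingCoeff_ne_zero]
      rintro rfl
      simp at hq
    have hne : (taylor X q - q).coeff (n + 1) ≠ 0 := by
      rw [hc]
      exact mul_ne_zero (mul_ne_zero (by exact_mod_cast (by omega : n + 2 ≠ 0)) hlc) X_ne_zero
    have hdeg : (taylor X q - q).natDegree = n + 1 := by
      apply natDegree_eq_of_le_of_coeff_ne_zero _ hne
      rw [natDegree_le_iff_coeff_eq_zero]
      intro m hm
      rw [coeff_sub, coeff_taylor_top, sub_self]
      intro m' hm'
      exact coeff_eq_zero_of_natDegree_lt (by omega)
    have := ih (taylor X q - q) hdeg ?_ R hR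
    · rw [leadingCoeff, hdeg, hc] at this
      convert this using 2
      rw [Nat.factorial_succ (n + 1)]
      push_cast
      ring
    · intro R' hR'
      have h3 := S.sub_mem (S.sub_mem (h (R' + X) (by simp [hR'])) (h R' hR')) (h X (by simp))
      convert h3 using 1
      rw [map_sub, taylor_taylor]
      ring

theorem final_pair (pi pj : K) (hi : pi.eval 0 = 0) (hj : pj.eval 0 = 0) (hne : pi ≠ pj) :
    ∃ δ : K, (∀ e, 0 < e → δ.eval e ≠ 0) ∧ ∀ p : K, p.eval 0 = 0 →
      ∃ F : Finset Dat, (∀ D ∈ F, Valid D) ∧ ∀ (χ : ℤ → ℕ) (a d e : ℤ),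
      (∀ D ∈ F, Rel pi pj χ a d e D) →
        χ (a + pi.eval d + p.eval (δ.eval e)) = χ (a + pi.eval d) := by
  have hq : pi - pj ≠ 0 := sub_ne_zero.2 hne
  have hq0 : (pi - pj).eval 0 = 0 := by simp [hi, hj]
  obtain ⟨n, hn⟩ : ∃ n, (pi - pj).natDegree = n + 1 := by
    apply Nat.exists_eq_succ_of_ne_zero
    intro h
    rw [eq_C_of_natDegree_eq_zero h, eval_C] at hq0
    apply hq
    rw [eq_C_of_natDegree_eq_zero h, hq0, C_0]
  have hmem := diff_mem (Per pi pj) n ((pi - pj).map C)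
    (by rw [natDegree_map_eq_of_injective C_injective, hn]) (fun R hR => per_base pi pj R hR)
  rw [leadingCoeff_map_of_injective C_injective] at hmem
  set c : ℤ := (n + 1).factorial * (pi - pj).leadingCoeff with hc
  have hc0 : c ≠ 0 := mul_ne_zero (by exact_mod_cast Nat.factorial_ne_zero _)
    (leadingCoeff_ne_zero.2 hq)
  refine ⟨C c * X ^ (n + 1), fun e he => ?_, fun p hp => ?_⟩
  · simp [hc0, he.ne']
  · have h1 := hmem (X * p.divX.comp (C c * X ^ (n + 1))) (by simp)
    obtain ⟨-, h2⟩ := h1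
    obtain ⟨F, hF, h⟩ := h2 0 (by simp)
    refine ⟨F, hF, fun χ a d e hr => ?_⟩
    have h3 := h χ a d e hr
    rw [E_zero, add_zero, E_C] at h3
    convert h3 using 3
    conv_lhs => rw [← divX_mul_X_add p, coeff_zero_eq_eval_zero, hp]
    simp [hc]
    ring

theorem final_set {k : ℕ} (P : Option (Fin k) → K) (hk : 0 < k) (h0 : ∀ i, (P i).eval 0 = 0)
    (hinj : Function.Injective P) (hnone : P none = 0) :
    ∃ A : Set (ℤ × ℤ), A.Finite ∧ ∀ χ : ℤ → ℕ, ∃ a d, (a, d) ∈ A ∧ d ≠ 0 ∧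
      ((∀ i, χ (a + (P i).eval d) = χ a) ∨
        Function.Injective (fun i => χ (a + (P i).eval d))) := by
  classical
  choose! δ hδ F hFv hF using fun (i j : Option (Fin k)) (hij : i ≠ j) =>
    final_pair (P i) (P j) (h0 i) (h0 j) (hinj.ne hij)
  let FF : Finset Dat := insert 0 (((Finset.univ : Finset (Option (Fin k) × Option (Fin k) ×
    Option (Fin k))).filter (fun t => t.1 ≠ t.2.1)).biUnion (fun t => F t.1 t.2.1 (P t.2.2)))
  have hFF : ∀ D ∈ FF, Valid D := by
    intro D hD
    rcases Finset.mem_insert.1 hD with rfl | hD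
    · exact ⟨by simp, by simp⟩
    · obtain ⟨t, ht, hD⟩ := Finset.mem_biUnion.1 hD
      exact hFv t.1 t.2.1 (Finset.mem_filter.1 ht).2 (P t.2.2) (h0 _) D hD
  obtain ⟨B, hB, H, hH, hpos, h⟩ := nil_vdw FF hFF (Set (Option (Fin k) × Option (Fin k)))
  refine ⟨B ∪ (fun t : (ℤ × ℤ) × ℤ × (Option (Fin k) × Option (Fin k)) =>
      (t.1.1 + (P t.2.2.1).eval t.1.2, (δ t.2.2.1 t.2.2.2).eval t.2.1)) ''
      (B ×ˢ (H ×ˢ Set.univ)), hB.union ((hB.prod (hH.prod Set.finite_univ)).image _), ?_⟩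
  intro χ
  obtain ⟨a, d, had, e, he, hh⟩ := h (fun a d =>
    {t | χ (a + (P t.1).eval d) = χ (a + (P t.2).eval d)})
  by_cases hr : Function.Injective (fun i => χ (a + (P i).eval d))
  · refine ⟨a, d, Or.inl had, ?_, Or.inr hr⟩
    rintro rfl
    have := @hr none (some ⟨0, hk⟩) (by simp [h0])
    simp at this
  · obtain ⟨i, j, hij, hne⟩ : ∃ i j, χ (a + (P i).eval d) = χ (a + (P j).eval d) ∧ i ≠ j := by
      simpa [Function.Injective] using hr
    refine ⟨a + (P i).eval d, (δ i j).eval e, Or.inr ⟨((a, d), e, (i, j)),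
      ⟨had, he, trivial⟩, rfl⟩, hδ i j hne e (hpos e he), Or.inl fun l => ?_⟩
    apply hF i j hne (P l) (h0 l) χ a d e
    intro D hD
    have hDm : D ∈ FF := by
      refine Finset.mem_insert_of_mem (Finset.mem_biUnion.2 ⟨(i, j, l), ?_, hD⟩)
      simpa using hne
    have hset := hh D hDm
    have : (i, j) ∈ {t : Option (Fin k) × Option (Fin k) |
      χ (a + (P t.1).eval d) = χ (a + (P t.2).eval d)} := hij
    rw [← hset] at this
    exact this

end CPV

/-- **Finitary canonical polynomial Van der Waerden theorem.**
Let `p 1, ..., p k` be pairwise distinct nonzero integral polynomials.  Then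
there exists `N` such that for every colouring `χ : {1, ..., N} → ℕ` there
exist `a ∈ ℤ` and `d ≠ 0` with `{a, a + p 1 d, ..., a + p k d} ⊆ {1, ..., N}`
such that either `χ` takes the same value on all of
`a, a + p 1 d, ..., a + p k d`, or these integers are pairwise distinct and
`χ` takes pairwise distinct values on them. -/
theorem finitary_canonical_polynomial_vdw {k : ℕ} (p : Fin k → Polynomial ℤ)
    (hp0 : ∀ i, (p i).eval 0 = 0) (hpne : ∀ i, p i ≠ 0)
    (hpdist : ∀ i j, i ≠ j → p i ≠ p j) :
    ∃ N : ℕ, ∀ χ : ℤ → ℕ,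
      ∃ a d : ℤ, d ≠ 0 ∧
        a ∈ Set.Icc (1 : ℤ) (N : ℤ) ∧
        (∀ i : Fin k, a + (p i).eval d ∈ Set.Icc (1 : ℤ) (N : ℤ)) ∧
        ((∀ i : Fin k, χ (a + (p i).eval d) = χ a) ∨
         ((Function.Injective fun i : Fin k => a + (p i).eval d) ∧
          (∀ i : Fin k, a + (p i).eval d ≠ a) ∧
          (Function.Injective fun i : Fin k => χ (a + (p i).eval d)) ∧
          (∀ i : Fin k, χ (a + (p i).eval d) ≠ χ a))) := by
  rcases Nat.eq_zero_or_pos k with rfl | hk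
  · exact ⟨1, fun χ => ⟨1, 1, one_ne_zero, by simp, fun i => i.elim0, Or.inl fun i => i.elim0⟩⟩
  let P : Option (Fin k) → Polynomial ℤ := fun o => o.elim 0 p
  obtain ⟨A, hA, h⟩ := CPV.final_set P hk
    (by rintro (_ | i); exacts [by simp [P], hp0 i])
    (by
      rintro (_ | i) (_ | j) hij
      · rfl
      · exact absurd hij.symm (hpne j)
      · exact absurd hij (hpne i)
      · by_contra hne
        exact hpdist i j (fun h => hne (by rw [h])) hij)
    rfl
  have hfin : ((fun t : (ℤ × ℤ) × Option (Fin k) => |t.1.1 + (P t.2).eval t.1.2|) ''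
    (A ×ˢ Set.univ)).Finite := (hA.prod Set.finite_univ).image _
  obtain ⟨M, hM⟩ := hfin.bddAbove
  have hM' : ∀ a d, (a, d) ∈ A → ∀ i, |a + (P i).eval d| ≤ M := fun a d had i =>
    hM ⟨((a, d), i), ⟨had, trivial⟩, rfl⟩
  refine ⟨(2 * M + 1).toNat, fun χ => ?_⟩
  obtain ⟨a, d, had, hd, hor⟩ := h (fun x => χ (x + M + 1))
  have hb : ∀ i, a + M + 1 + (P i).eval d ∈ Set.Icc (1 : ℤ) ((2 * M + 1).toNat : ℤ) := by
    intro i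
    have := abs_le.1 (hM' a d had i)
    constructor
    · linarith
    · refine le_trans ?_ (Int.self_le_toNat _)
      linarith
  have hc : ∀ i, χ (a + (P i).eval d + M + 1) = χ (a + M + 1 + (P i).eval d) := fun i => by
    congr 1; ring
  simp only [hc] at hor
  refine ⟨a + M + 1, d, hd, by simpa [P] using hb none, fun i => hb (some i), ?_⟩
  rcases hor with hm | hinj
  · exact Or.inl fun i => hm (some i)
  · have h1 : Function.Injective fun i : Fin k => χ (a + M + 1 + (p i).eval d) := by
      intro i j hij
      exact Option.some_injective _ (@hinj (some i) (some j) hij)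
    have h2 : ∀ i : Fin k, χ (a + M + 1 + (p i).eval d) ≠ χ (a + M + 1) := by
      intro i hi
      have := @hinj (some i) none (by simpa [P] using hi)
      simp at this
    exact Or.inr ⟨fun i j hij => h1 (congrArg χ hij), fun i hi => h2 i (congrArg χ hi), h1, h2⟩
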